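/- Let M ≥ 2 be an integer, f : ℤ → ℝ a function with f(n+M) = f(n) for all n ∈ ℤ, ν ∈ {0,1}, and a ≥ 0, b ≥ 1 integers. Assume G_f^{(ν)}(k) ≠ 0 for some integer k ≥ 1 and let k_ν be the least such k. Define the sequence ξ(n) as in the context. Then ξ(n) / [ (−1)^ν · (M/(2π k_ν))^(2n+ν+1) · G_f^{(ν)}(k_ν) · 2^(2n+ν) · n! · n^(ν−1/2) · e^(b k_ν² π²/(2M²)) / (b^n · √(πM)) ] → 1 as n → ∞. -/

import Mathlib

/-- The Fourier coefficient `G_f^{(ν)}(k)` of a function `f : ℤ → ℝ` of period `M`. -/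
noncomputable def Gf (M : ℕ) (f : ℤ → ℝ) (ν : ℕ) (k : ℕ) : ℝ :=
  if ν = 0 then
    (2 / Real.sqrt M) * ∑ m ∈ Finset.range M, f m * Real.sin (2 * Real.pi * m * k / M)
  else
    (2 / Real.sqrt M) * ∑ m ∈ Finset.range M, f m * Real.cos (2 * Real.pi * m * k / M)

/-- `C_n = (−1)^(n+1) (M^(2n+ν)/(2n+ν+1)) ∑_{m=1}^M f(m) B_{2n+ν+1}(m/M)`. -/
noncomputable def Cf (M : ℕ) (f : ℤ → ℝ) (ν : ℕ) (n : ℕ) : ℝ :=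
  (-1) ^ (n + 1) * ((M : ℝ) ^ (2 * n + ν) / (2 * n + ν + 1)) *
    ∑ m ∈ Finset.Icc 1 M,
      f m * (((Polynomial.bernoulli (2 * n + ν + 1)).eval ((m : ℚ) / (M : ℚ)) : ℚ) : ℝ)

/-- `D_n = b^(−n) ∑_{k=0}^n C(n,k) a^(n−k) C_k`. -/
noncomputable def Df (M : ℕ) (f : ℤ → ℝ) (ν a b : ℕ) (n : ℕ) : ℝ :=
  ((b : ℝ) ^ n)⁻¹ *
    ∑ k ∈ Finset.range (n + 1), (n.choose k : ℝ) * (a : ℝ) ^ (n - k) * Cf M f ν k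

/-- The unsigned Stirling number of the first kind `s(n,j)`: the coefficient of `X^j`
in `X (X+1) (X+2) ⋯ (X+n−1)`. -/
noncomputable def stirling1 (n j : ℕ) : ℝ :=
  (∏ i ∈ Finset.range n, (Polynomial.X + Polynomial.C (i : ℝ))).coeff j

/-- `ξ(0) = D_0` and `ξ(n) = (1/n!) ∑_{m=0}^{n−1} s(n, n−m) D_{n−m}` for `n ≥ 1`. -/
noncomputable def xif (M : ℕ) (f : ℤ → ℝ) (ν a b : ℕ) : ℕ → ℝ
  | 0 => Df M f ν a b 0
  | n + 1 => (1 / ((n + 1).factorial : ℝ)) *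
      ∑ m ∈ Finset.range (n + 1), stirling1 (n + 1) (n + 1 - m) * Df M f ν a b (n + 1 - m)

section helpers
open Filter Topology Finset

lemma tannery_aux (w : ℕ → ℕ → ℝ) (w0 bd u : ℕ → ℝ) (hu : Tendsto u atTop (𝓝 1))
    (hbd : Summable bd) (hw : ∀ n m, m ≤ n → |w n m| ≤ bd m)
    (hlim : ∀ m, Tendsto (fun n => w n m) atTop (𝓝 (w0 m))) :
    Tendsto (fun n => ∑ m ∈ range (n+1), w n m * u (n-m)) atTop (𝓝 (∑' m, w0 m)) := by
  obtain ⟨U, hU⟩ : ∃ U, ∀ n, |u n| ≤ U := by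
    obtain ⟨U, hU⟩ := (Metric.isBounded_range_of_tendsto u hu).exists_norm_le
    exact ⟨U, fun n => hU _ ⟨n, rfl⟩⟩
  have hU0 : 0 ≤ U := (abs_nonneg _).trans (hU 0)
  have key := tendsto_tsum_of_dominated_convergence (𝓕 := atTop)
    (f := fun n m => if m ∈ range (n+1) then w n m * u (n-m) else 0) (g := w0)
    (bound := fun m => |bd m| * U) (hbd.abs.mul_right U) ?_ ?_
  · refine key.congr fun n => ?_
    rw [tsum_eq_sum (s := range (n+1))]
    · exact Finset.sum_congr rfl fun m hm => by simp only [hm, if_true]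
    · intro m hm; simp only [hm, if_false]
  · intro m
    have h1 : Tendsto (fun n => w n m * u (n-m)) atTop (𝓝 (w0 m)) := by
      have := (hlim m).mul (hu.comp (tendsto_sub_atTop_nat m))
      simpa using this
    refine h1.congr' ?_
    filter_upwards [eventually_ge_atTop m] with n hn
    rw [if_pos]; simp; omega
  · refine Eventually.of_forall fun n m => ?_
    split_ifs with h
    · rw [Real.norm_eq_abs, abs_mul]
      have : m ≤ n := by simp at h; omega
      exact mul_le_mul ((hw n m this).trans (le_abs_self _)) (hU _) (abs_nonneg _) (abs_nonneg _)
    · simp; positivity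

/-- elementary symmetric polynomial `e_m(0,…,n-1)` -/
def elemE : ℕ → ℕ → ℕ
  | 0, 0 => 1
  | 0, _ + 1 => 0
  | _ + 1, 0 => 1
  | n + 1, m + 1 => elemE n (m+1) + n * elemE n m

lemma elemE_zero (n : ℕ) : elemE n 0 = 1 := by cases n <;> rfl

lemma elemE_succ (n m : ℕ) : elemE (n+1) (m+1) = elemE n (m+1) + n * elemE n m := rfl

lemma elemE_big (n : ℕ) : ∀ m, n < m → elemE n m = 0 := by
  induction n with
  | zero => intro m hm; cases m with
    | zero => omega
    | succ m => rfl
  | succ n ih => intro m hm; cases m with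
    | zero => omega
    | succ m => rw [elemE_succ, ih _ (by omega), ih _ (by omega)]; simp

lemma elemE_self (n : ℕ) : elemE (n+1) (n+1) = 0 := by
  induction n with
  | zero => rfl
  | succ n ih => rw [elemE_succ, ih, elemE_big _ _ (by omega)]; simp

lemma stirling1_succ_zero (n : ℕ) : stirling1 (n+1) 0 = n * stirling1 n 0 := by
  unfold stirling1
  rw [Finset.prod_range_succ, mul_add, Polynomial.coeff_add, Polynomial.coeff_mul_C,
    Polynomial.mul_coeff_zero]
  simp; ring

lemma stirling1_succ_succ (n j : ℕ) :
    stirling1 (n+1) (j+1) = stirling1 n j + n * stirling1 n (j+1) := by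
  unfold stirling1
  rw [Finset.prod_range_succ, mul_add, Polynomial.coeff_add, Polynomial.coeff_mul_C,
    Polynomial.coeff_mul_X]
  ring

lemma stirling1_big (n : ℕ) : ∀ j, n < j → stirling1 n j = 0 := by
  induction n with
  | zero => intro j hj; cases j with
    | zero => omega
    | succ m => simp [stirling1, Polynomial.coeff_one]
  | succ n ih => intro j hj; cases j with
    | zero => omega
    | succ m => rw [stirling1_succ_succ, ih _ (by omega), ih _ (by omega)]; simp

lemma stirling1_eq (n : ℕ) : ∀ j m, n = j + m → stirling1 n j = elemE n m := by
  induction n with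
  | zero =>
    intro j m h
    obtain rfl : j = 0 := by omega
    obtain rfl : m = 0 := by omega
    simp [stirling1, elemE]
  | succ n ih =>
    intro j m h
    cases j with
    | zero =>
      obtain rfl : m = n + 1 := by omega
      rw [stirling1_succ_zero, ih 0 n (by omega), elemE_succ, elemE_big n (n+1) (by omega)]
      push_cast; ring
    | succ j =>
      cases m with
      | zero =>
        obtain rfl : j = n := by omega
        rw [stirling1_succ_succ, ih j 0 (by omega), stirling1_big _ _ (by omega)]
        simp [elemE_zero]
      | succ m =>
        rw [stirling1_succ_succ, ih j (m+1) (by omega), ih (j+1) m (by omega), elemE_succ]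
        push_cast; ring

lemma elemE_bound (ν : ℕ) (n : ℕ) : ∀ m,
    m.factorial * elemE n m ≤ (2*n+ν).descFactorial (2*m) := by
  induction n with
  | zero => intro m; cases m with
    | zero => simp [elemE]
    | succ m => simp [elemE]
  | succ n ih => intro m; cases m with
    | zero => simp [elemE]
    | succ m =>
      have h1 := ih m
      have h2 := ih (m+1)
      have e1 : (2*(n+1)+ν).descFactorial (2*(m+1)) =
          (2*n+ν+2)*((2*n+ν+1)*(2*n+ν).descFactorial (2*m)) := by
        rw [show 2*(n+1)+ν = (2*n+ν+1)+1 by ring, show 2*(m+1) = 2*m+1+1 by ring,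
          Nat.succ_descFactorial_succ, Nat.succ_descFactorial_succ]
      have e2 : (2*n+ν).descFactorial (2*(m+1)) =
          (2*n+ν-(2*m+1))*((2*n+ν-2*m)*(2*n+ν).descFactorial (2*m)) := by
        rw [show 2*(m+1) = 2*m+1+1 by ring, Nat.descFactorial_succ, Nat.descFactorial_succ]
      rw [e2] at h2
      rw [e1, elemE_succ, mul_add]
      have h3 : (m+1).factorial * (n * elemE n m) ≤ (m+1)*n*(2*n+ν).descFactorial (2*m) := by
        rw [Nat.factorial_succ]
        calc _ = (m+1)*n*(m.factorial * elemE n m) := by ring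
          _ ≤ _ := Nat.mul_le_mul_left _ h1
      refine (add_le_add h2 h3).trans ?_
      rcases le_or_gt (2*m) (2*n+ν) with h | h
      · have : (2*n+ν-(2*m+1))*(2*n+ν-2*m) + (m+1)*n ≤ (2*n+ν+2)*(2*n+ν+1) := by
          obtain ⟨y, hy⟩ := Nat.exists_eq_add_of_le h
          have a1 : 2*n+ν-2*m = y := by omega
          have a2 : 2*n+ν-(2*m+1) ≤ y := by omega
          rw [hy] at a1 a2 ⊢
          rw [a1]
          have a3 : n ≤ 2*m+y := by omega
          calc _ ≤ y*y + (m+1)*(2*m+y) := by gcongr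
            _ ≤ _ := by nlinarith
        calc _ = ((2*n+ν-(2*m+1))*(2*n+ν-2*m) + (m+1)*n) * (2*n+ν).descFactorial (2*m) := by ring
          _ ≤ _ := Nat.mul_le_mul_right _ this
          _ = _ := by ring
      · rw [Nat.descFactorial_of_lt h]; simp

lemma elemE_upper (n : ℕ) : ∀ m, 2^m * m.factorial * elemE n m ≤ n^(2*m) := by
  induction n with
  | zero => intro m; cases m with
    | zero => simp [elemE]
    | succ m => simp [elemE]
  | succ n ih => intro m; cases m with
    | zero => simp [elemE]
    | succ m =>
      have h1 := ih m
      have h2 := ih (m+1)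
      have h3 : n^(2*(m+1)) + 2*(m+1)*n*n^(2*m) ≤ (n+1)^(2*(m+1)) := by
        have e : ∀ j, n^(j+1) + (j+1)*n^j ≤ (n+1)^(j+1) := by
          intro j
          induction j with
          | zero => simp
          | succ j ihj =>
            calc n^(j+1+1) + (j+1+1)*n^(j+1) ≤ (n^(j+1) + (j+1)*n^j)*(n+1) := by
                  have : 0 ≤ (j+1)*n^j := Nat.zero_le _
                  rw [pow_succ n (j+1), pow_succ n j]; nlinarith
              _ ≤ (n+1)^(j+1)*(n+1) := Nat.mul_le_mul_right _ ihj
              _ = _ := by ring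
        have := e (2*m+1)
        calc _ = n^(2*m+1+1) + (2*m+1+1)*n^(2*m+1) := by ring
          _ ≤ _ := this
      rw [elemE_succ, Nat.factorial_succ]
      rw [Nat.factorial_succ] at h2
      calc _ = 2^(m+1) * ((m+1)*m.factorial) * elemE n (m+1)
            + 2*(m+1)*n*(2^m * m.factorial * elemE n m) := by ring
        _ ≤ n^(2*(m+1)) + 2*(m+1)*n*n^(2*m) := by gcongr
        _ ≤ _ := h3

lemma elemE_lower (n : ℕ) : ∀ m, n.descFactorial (2*m) ≤ 2^m * m.factorial * elemE n m := by
  induction n with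
  | zero => intro m; cases m with
    | zero => simp [elemE]
    | succ m => simp [elemE]
  | succ n ih => intro m; cases m with
    | zero => simp [elemE]
    | succ m =>
      have h1 := ih m
      have h2 := ih (m+1)
      rw [elemE_succ, Nat.factorial_succ]
      rw [Nat.factorial_succ] at h2
      have e2 : n.descFactorial (2*(m+1)) = (n-(2*m+1))*((n-2*m)*n.descFactorial (2*m)) := by
        rw [show 2*(m+1) = 2*m+1+1 by ring, Nat.descFactorial_succ, Nat.descFactorial_succ]
      have e1 : (n+1).descFactorial (2*(m+1)) = (n+1)*((n-2*m)*n.descFactorial (2*m)) := by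
        rw [show 2*(m+1) = 2*m+1+1 by ring, Nat.succ_descFactorial_succ, Nat.descFactorial_succ]
      calc (n+1).descFactorial (2*(m+1)) ≤
            n.descFactorial (2*(m+1)) + 2*(m+1)*n*n.descFactorial (2*m) := by
            rw [e1, e2]
            rcases lt_or_ge n (2*m) with h | h
            · rw [Nat.descFactorial_of_lt h]; simp
            · have : (n+1)*(n-2*m) ≤ (n-(2*m+1))*(n-2*m) + 2*(m+1)*n := by
                obtain ⟨y, rfl⟩ := Nat.exists_eq_add_of_le h
                rw [show 2*m+y-2*m = y by omega]
                cases y with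
                | zero => simp
                | succ y => rw [show 2*m+(y+1)-(2*m+1) = y by omega]; nlinarith
              calc _ = (n+1)*(n-2*m) * n.descFactorial (2*m) := by ring
                _ ≤ _ := Nat.mul_le_mul_right _ this
                _ = _ := by ring
        _ ≤ 2^(m+1) * ((m+1)*m.factorial) * elemE n (m+1)
            + 2*(m+1)*n*(2^m * m.factorial * elemE n m) := by gcongr
        _ = _ := by ring

lemma desc_tendsto (c ν j : ℕ) : Tendsto (fun n : ℕ => ((c*n+ν).descFactorial j : ℝ) / (n:ℝ)^j)
    atTop (𝓝 ((c:ℝ)^j)) := by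
  by_cases hc : c = 0
  · subst hc
    cases j with
    | zero => simp
    | succ j =>
      simp only [zero_mul, zero_add]
      rw [Nat.cast_zero, zero_pow (by omega)]
      exact tendsto_const_nhds.div_atTop
        ((tendsto_pow_atTop (by omega)).comp tendsto_natCast_atTop_atTop)
  induction j with
  | zero => simp
  | succ j ih =>
    have h : Tendsto (fun n : ℕ => ((c*n+ν-j : ℕ) : ℝ) / (n:ℝ)) atTop (𝓝 (c:ℝ)) := by
      have h1 : Tendsto (fun n : ℕ => (c:ℝ) + ((ν:ℝ) - j) / (n:ℝ)) atTop (𝓝 ((c:ℝ) + 0)) :=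
        tendsto_const_nhds.add (tendsto_const_nhds.div_atTop tendsto_natCast_atTop_atTop)
      rw [add_zero] at h1
      refine h1.congr' ?_
      filter_upwards [eventually_ge_atTop j, eventually_gt_atTop 0] with n hn hn0
      have : j ≤ c*n+ν := by nlinarith [Nat.pos_of_ne_zero hc]
      rw [Nat.cast_sub this]
      have : (n:ℝ) ≠ 0 := by positivity
      push_cast; field_simp; ring
    have := h.mul ih
    rw [← pow_succ'] at this
    refine this.congr fun n => ?_
    rw [Nat.descFactorial_succ, Nat.cast_mul, pow_succ', mul_div_mul_comm]

lemma elemE_tendsto (m : ℕ) : Tendsto (fun n : ℕ => (elemE n m : ℝ) / (n:ℝ)^(2*m)) atTop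
    (𝓝 (1/(2^m * m.factorial))) := by
  have hp : (0:ℝ) < 2^m * m.factorial := by positivity
  have hl := (desc_tendsto 1 0 (2*m)).div_const (2^m * m.factorial : ℝ)
  simp only [one_mul, add_zero, Nat.cast_one, one_pow] at hl
  refine tendsto_of_tendsto_of_tendsto_of_le_of_le' hl tendsto_const_nhds ?_ ?_
  · filter_upwards with n
    rw [div_right_comm]
    gcongr
    rw [div_le_iff₀ hp]
    have := elemE_lower n m
    calc ((n.descFactorial (2*m) : ℕ):ℝ) ≤ ((2^m * m.factorial * elemE n m : ℕ) : ℝ) := by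
          exact_mod_cast this
      _ = _ := by push_cast; ring
  · filter_upwards [eventually_gt_atTop 0] with n hn
    rw [div_le_div_iff₀ (by positivity) hp]
    have := elemE_upper n m
    calc (elemE n m : ℝ) * (2^m * m.factorial) = ((2^m * m.factorial * elemE n m : ℕ) : ℝ) := by
          push_cast; ring
      _ ≤ ((n^(2*m) : ℕ):ℝ) := by exact_mod_cast this
      _ = _ := by push_cast; ring

lemma sum_range_eq_Icc (g : ℕ → ℝ) (M : ℕ) (h : g 0 = g M) :
    ∑ m ∈ range M, g m = ∑ m ∈ Icc 1 M, g m := by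
  have h1 : ∀ M, ∑ m ∈ range (M+1), g m = g 0 + ∑ m ∈ Icc 1 M, g m := by
    intro M
    induction M with
    | zero => simp
    | succ M ih => rw [Finset.sum_range_succ, ih, Finset.sum_Icc_succ_top (by omega)]; ring
  have := h1 M
  rw [Finset.sum_range_succ] at this
  linarith

lemma cast_eval_q (p : Polynomial ℚ) (q : ℚ) :
    ((p.eval q : ℚ) : ℝ) = (Polynomial.map (algebraMap ℚ ℝ) p).eval (q : ℝ) := by
  rw [Polynomial.eval_map]
  exact (Polynomial.eval₂_at_apply (algebraMap ℚ ℝ) q).symm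

lemma Cf_hasSum (M : ℕ) (hM : 2 ≤ M) (f : ℤ → ℝ)
    (hf : ∀ n : ℤ, f (n + M) = f n) (ν : ℕ) (hν : ν = 0 ∨ ν = 1) (n : ℕ) (hn : 1 ≤ n) :
    HasSum (fun k : ℕ => Gf M f ν k / (k:ℝ)^(2*n+ν+1))
      (Cf M f ν n * ((-1)^ν * (2*Real.pi)^(2*n+ν+1) /
        ((M:ℝ)^(2*n+ν) * ((2*n+ν).factorial : ℝ) * Real.sqrt M))) := by
  have hM0 : (0:ℝ) < M := by positivity
  have hs0 : (0:ℝ) < Real.sqrt M := Real.sqrt_pos.2 hM0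
  have hss : Real.sqrt M * Real.sqrt M = M := Real.mul_self_sqrt hM0.le
  have hfM : f ((M:ℕ):ℤ) = f ((0:ℕ):ℤ) := by have := hf 0; simpa using this
  have hmem : ∀ m ∈ Icc 1 M, ((m:ℝ)/M) ∈ Set.Icc (0:ℝ) 1 := by
    intro m hm
    rw [Finset.mem_Icc] at hm
    refine ⟨by positivity, ?_⟩
    rw [div_le_one hM0]; exact_mod_cast hm.2
  rcases hν with rfl | rfl
  · have key := hasSum_sum (s := Icc 1 M) (fun m hm =>
      (hasSum_one_div_nat_pow_mul_sin (k := n) (by omega) (hmem m hm)).mul_left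
        (2 / Real.sqrt M * f m))
    have q1 : (fun k : ℕ => Gf M f 0 k / (k:ℝ)^(2*n+0+1)) = fun k : ℕ => ∑ m ∈ Icc 1 M,
        2 / Real.sqrt M * f m * (1 / (k:ℝ)^(2*n+1) *
          Real.sin (2 * Real.pi * k * ((m:ℝ)/M))) := by
      funext k
      unfold Gf
      rw [if_pos rfl, sum_range_eq_Icc _ M, Finset.mul_sum, Finset.sum_div]
      · refine Finset.sum_congr rfl fun m hm => ?_
        rw [show 2 * Real.pi * m * k / M = 2 * Real.pi * k * (m/M) by ring]
        ring
      · simp only [hfM]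
        rw [show 2 * Real.pi * (M:ℕ) * k / M = k * (2 * Real.pi) by field_simp,
          show (k:ℝ) * (2 * Real.pi) = (2*k:ℕ) * Real.pi by push_cast; ring, Real.sin_nat_mul_pi]
        simp
    have q2 : Cf M f 0 n * ((-1)^0 * (2*Real.pi)^(2*n+0+1) /
        ((M:ℝ)^(2*n+0) * ((2*n+0).factorial : ℝ) * Real.sqrt M)) = ∑ m ∈ Icc 1 M,
        2 / Real.sqrt M * f m *
        ((-1 : ℝ) ^ (n + 1) * (2 * Real.pi) ^ (2*n+1) / 2 / (2*n+1).factorial *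
        (Polynomial.map (algebraMap ℚ ℝ) (Polynomial.bernoulli (2*n+1))).eval ((m:ℝ)/M)) := by
      unfold Cf
      rw [Finset.mul_sum, Finset.sum_mul]
      refine Finset.sum_congr rfl fun m hm => ?_
      rw [cast_eval_q]
      push_cast
      simp only [show 2*n+0+1 = 2*n+1 by ring, add_zero]
      generalize Polynomial.eval ((m:ℝ)/M) _ = z
      rw [show 2*n+1 = 2*n+0+1 by ring, Nat.factorial_succ (2*n+0)]
      have : ((2*n+0).factorial : ℝ) ≠ 0 := by positivity
      push_cast
      try simp only [add_zero] at *
      field_simp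
      try ring
    rw [q1, q2]
    exact key
  · have key := hasSum_sum (s := Icc 1 M) (fun m hm =>
      (hasSum_one_div_nat_pow_mul_cos (k := n+1) (by omega) (hmem m hm)).mul_left
        (2 / Real.sqrt M * f m))
    have q1 : (fun k : ℕ => Gf M f 1 k / (k:ℝ)^(2*n+1+1)) = fun k : ℕ => ∑ m ∈ Icc 1 M,
        2 / Real.sqrt M * f m * (1 / (k:ℝ)^(2*(n+1)) *
          Real.cos (2 * Real.pi * k * ((m:ℝ)/M))) := by
      funext k
      unfold Gf
      rw [if_neg (by norm_num), sum_range_eq_Icc _ M, Finset.mul_sum, Finset.sum_div]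
      · refine Finset.sum_congr rfl fun m hm => ?_
        rw [show 2 * Real.pi * m * k / M = 2 * Real.pi * k * (m/M) by ring]
        ring
      · simp only [hfM]
        rw [show 2 * Real.pi * (M:ℕ) * k / M = k * (2 * Real.pi) by field_simp,
          Real.cos_nat_mul_two_pi]
        simp
    have q2 : Cf M f 1 n * ((-1)^1 * (2*Real.pi)^(2*n+1+1) /
        ((M:ℝ)^(2*n+1) * ((2*n+1).factorial : ℝ) * Real.sqrt M)) = ∑ m ∈ Icc 1 M,
        2 / Real.sqrt M * f m *
        ((-1 : ℝ) ^ (n+1 + 1) * (2 * Real.pi) ^ (2*(n+1)) / 2 / (2*(n+1)).factorial *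
        (Polynomial.map (algebraMap ℚ ℝ) (Polynomial.bernoulli (2*(n+1)))).eval ((m:ℝ)/M)) := by
      unfold Cf
      rw [Finset.mul_sum, Finset.sum_mul]
      refine Finset.sum_congr rfl fun m hm => ?_
      rw [cast_eval_q]
      push_cast
      simp only [show 2*n+1+1 = 2*(n+1) by ring, add_zero]
      generalize Polynomial.eval ((m:ℝ)/M) _ = z
      rw [show 2*(n+1) = 2*n+1+1 by ring, Nat.factorial_succ (2*n+1)]
      have : ((2*n+1).factorial : ℝ) ≠ 0 := by positivity
      push_cast
      try simp only [add_zero] at *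
      field_simp
      try ring
    rw [q1, q2]
    exact key

lemma Gsum_tendsto (G : ℕ → ℝ) (B : ℝ) (hB : ∀ k, |G k| ≤ B) (k0 ν : ℕ) (hk0 : 1 ≤ k0)
    (hmin : ∀ j, 1 ≤ j → j < k0 → G j = 0) :
    Tendsto (fun n : ℕ => ∑' k : ℕ, G k * ((k0:ℝ)/k)^(2*n+ν+1)) atTop (𝓝 (G k0)) := by
  have hB0 : 0 ≤ B := (abs_nonneg _).trans (hB 0)
  have key := tendsto_tsum_of_dominated_convergence (𝓕 := atTop)
    (f := fun (n k : ℕ) => G k * ((k0:ℝ)/k)^(2*n+ν+1)) (g := fun k => if k = k0 then G k0 else 0)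
    (bound := fun k => B * (k0:ℝ)^2 * (1/(k:ℝ)^2))
    ((Real.summable_one_div_nat_pow.2 (by norm_num)).mul_left _) ?_ ?_
  · simpa using key
  · intro k
    rcases lt_trichotomy k k0 with h | h | h
    · rw [if_neg h.ne]
      rcases Nat.eq_zero_or_pos k with rfl | h'
      · simp
      · simp [hmin k h' h]
    · subst h
      have : (k:ℝ) ≠ 0 := by positivity
      simp [div_self this]
    · rw [if_neg h.ne']
      have h1 : Tendsto (fun n : ℕ => ((k0:ℝ)/k)^n) atTop (𝓝 0) := by
        apply tendsto_pow_atTop_nhds_zero_of_lt_one (by positivity)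
        rw [div_lt_one (by exact_mod_cast (by omega : 0 < k))]
        exact_mod_cast h
      have h2 : Tendsto (fun n : ℕ => 2*n+ν+1) atTop atTop :=
        tendsto_atTop_mono (fun n => by simp only [id]; omega) tendsto_id
      simpa using (h1.comp h2).const_mul (G k)
  · filter_upwards [eventually_ge_atTop 1] with n hn k
    rw [Real.norm_eq_abs, abs_mul]
    rcases lt_or_ge k k0 with h | h
    · rcases Nat.eq_zero_or_pos k with rfl | h'
      · simp
      · rw [hmin k h' h]; simp; positivity
    · have hk : (0:ℝ) < k := by exact_mod_cast (by omega : 0 < k)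
      have : |((k0:ℝ)/k)^(2*n+ν+1)| ≤ ((k0:ℝ)/k)^2 := by
        rw [abs_of_nonneg (by positivity)]
        apply pow_le_pow_of_le_one (by positivity) _ (by omega)
        rw [div_le_one hk]; exact_mod_cast h
      calc _ ≤ B * ((k0:ℝ)/k)^2 := mul_le_mul (hB k) this (abs_nonneg _) hB0
        _ = _ := by rw [div_pow]; ring

lemma Gf_bdd (M : ℕ) (f : ℤ → ℝ) (ν k : ℕ) :
    |Gf M f ν k| ≤ 2 / Real.sqrt M * ∑ m ∈ range M, |f m| := by
  unfold Gf
  split_ifs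
  all_goals
    rw [abs_mul, abs_of_nonneg (by positivity : 0 ≤ 2 / Real.sqrt M)]
    refine mul_le_mul_of_nonneg_left ((Finset.abs_sum_le_sum_abs _ _).trans ?_) (by positivity)
    refine Finset.sum_le_sum fun m _ => ?_
    rw [abs_mul]
    refine mul_le_of_le_one_right (abs_nonneg _) ?_
    first | exact Real.abs_sin_le_one _ | exact Real.abs_cos_le_one _

/-- the leading constant -/
noncomputable def Acst (M : ℕ) (f : ℤ → ℝ) (ν k : ℕ) : ℝ :=
  (-1)^ν * ((M:ℝ)/(2*Real.pi*k))^(ν+1) * Gf M f ν k / Real.sqrt M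

/-- the growth -/
noncomputable def cgr (R : ℝ) (ν n : ℕ) : ℝ := ((2*n+ν).factorial : ℝ) * R^n

lemma Cf_tendsto (M : ℕ) (hM : 2 ≤ M) (f : ℤ → ℝ)
    (hf : ∀ n : ℤ, f (n + M) = f n) (ν : ℕ) (hν : ν = 0 ∨ ν = 1)
    (kν : ℕ) (hkν : 1 ≤ kν) (hG : Gf M f ν kν ≠ 0)
    (hmin : ∀ j : ℕ, 1 ≤ j → j < kν → Gf M f ν j = 0) :
    Tendsto (fun n => Cf M f ν n / (Acst M f ν kν * cgr (((M:ℝ)/(2*Real.pi*kν))^2) ν n))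
      atTop (𝓝 1) := by
  have hM0 : (0:ℝ) < M := by positivity
  have hk0 : (0:ℝ) < kν := by positivity
  have hs0 : (0:ℝ) < Real.sqrt M := Real.sqrt_pos.2 hM0
  have hss : Real.sqrt M * Real.sqrt M = M := Real.mul_self_sqrt hM0.le
  have hpi := Real.pi_pos
  have h := (Gsum_tendsto (Gf M f ν) _ (Gf_bdd M f ν) kν ν hkν hmin).div_const (Gf M f ν kν)
  rw [div_self hG] at h
  refine h.congr' ?_
  filter_upwards [eventually_ge_atTop 1] with n hn
  have h1 := (Cf_hasSum M hM f hf ν hν n hn).mul_left ((kν:ℝ)^(2*n+ν+1))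
  have h2 : ∑' k : ℕ, Gf M f ν k * ((kν:ℝ)/k)^(2*n+ν+1) = (kν:ℝ)^(2*n+ν+1) *
      (Cf M f ν n * ((-1)^ν * (2*Real.pi)^(2*n+ν+1) /
        ((M:ℝ)^(2*n+ν) * ((2*n+ν).factorial : ℝ) * Real.sqrt M))) := by
    rw [← h1.tsum_eq]
    refine tsum_congr fun k => ?_
    rw [div_pow]; ring
  rw [h2]
  unfold Acst cgr
  have hfac : ((2*n+ν).factorial : ℝ) ≠ 0 := by positivity
  have e1 : (((M:ℝ)/(2*Real.pi*kν))^2)^n * ((M:ℝ)/(2*Real.pi*kν))^(ν+1) =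
      (M:ℝ)^(2*n+ν) * M / ((2*Real.pi)^(2*n+ν+1) * (kν:ℝ)^(2*n+ν+1)) := by
    rw [← pow_mul, ← pow_add, div_pow, mul_pow]; ring_nf
  have e2 : ((-1:ℝ)^ν) * (-1)^ν = 1 := by rw [← mul_pow]; simp
  have e3 : (-1:ℝ)^ν ≠ 0 := by positivity
  rw [show (-1)^ν * ((M:ℝ)/(2*Real.pi*kν))^(ν+1) * Gf M f ν kν / Real.sqrt M *
      (((2*n+ν).factorial : ℝ) * (((M:ℝ)/(2*Real.pi*kν))^2)^n) =
      (-1)^ν * Gf M f ν kν / Real.sqrt M * ((2*n+ν).factorial : ℝ) *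
      ((((M:ℝ)/(2*Real.pi*kν))^2)^n * ((M:ℝ)/(2*Real.pi*kν))^(ν+1)) by ring, e1]
  rw [div_eq_div_iff hG (by positivity)]
  field_simp
  have e4 : Real.sqrt M ^ 2 = M := Real.sq_sqrt hM0.le
  rw [e4, sq, e2, mul_one]

lemma central_tendsto : Tendsto (fun n : ℕ => ((2*n).factorial : ℝ) * Real.sqrt n /
    (4^n * (n.factorial : ℝ)^2) * Real.sqrt Real.pi) atTop (𝓝 1) := by
  have hs := Stirling.tendsto_stirlingSeq_sqrt_pi
  have h2 : Tendsto (fun n : ℕ => 2*n) atTop atTop :=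
    tendsto_atTop_mono (fun n => by simp only [id]; omega) tendsto_id
  have hp : 0 < Real.sqrt Real.pi := Real.sqrt_pos.2 Real.pi_pos
  have := ((hs.comp h2).div (hs.pow 2) (by positivity)).mul_const (Real.sqrt Real.pi)
  rw [show Real.sqrt Real.pi / Real.sqrt Real.pi ^ 2 * Real.sqrt Real.pi = 1 by
    field_simp] at this
  refine this.congr' ?_
  filter_upwards [eventually_gt_atTop 0] with n hn
  have hn' : (0:ℝ) < n := by exact_mod_cast hn
  simp only [Function.comp, Stirling.stirlingSeq, Pi.div_apply]
  congr 1
  push_cast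
  have e1 : Real.sqrt (2*(2*n)) = 2 * Real.sqrt n := by
    rw [← mul_assoc, Real.sqrt_mul (by norm_num)]
    norm_num
  have e2 : Real.sqrt (2*n) ^ 2 = 2*n := Real.sq_sqrt (by positivity)
  have e3 : Real.sqrt n ^ 2 = n := Real.sq_sqrt (by positivity)
  have hsn : 0 < Real.sqrt n := Real.sqrt_pos.2 hn'
  have hex := Real.exp_pos 1
  rw [e1, div_pow _ _ 2, mul_pow, e2, div_pow, div_pow, mul_pow, pow_mul 2 2 n]
  generalize Real.exp 1 = E at *
  norm_num
  field_simp
  rw [e3]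
  ring

lemma cgr_sub (R : ℝ) (hR : 0 < R) (ν n m : ℕ) (h : m ≤ n) :
    cgr R ν (n-m) = cgr R ν n * ((R⁻¹)^m / ((2*n+ν).descFactorial (2*m) : ℝ)) := by
  unfold cgr
  have h1 := Nat.factorial_mul_descFactorial (n := 2*n+ν) (k := 2*m) (by omega)
  rw [show 2*n+ν-2*m = 2*(n-m)+ν by omega] at h1
  have h2 : ((2*n+ν).descFactorial (2*m) : ℝ) ≠ 0 := by
    rw [Nat.cast_ne_zero, Ne, Nat.descFactorial_eq_zero_iff_lt]; omega
  have h3 : R^n = R^(n-m) * R^m := by rw [← pow_add]; congr 1; omega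
  rw [← h1, h3, inv_pow]
  push_cast
  field_simp

lemma desc_cmp (ν n m : ℕ) (h : m ≤ n) :
    n.choose m * m.factorial ≤ (2*n+ν).descFactorial (2*m) := by
  rw [mul_comm, ← Nat.descFactorial_eq_factorial_mul_choose]
  rw [← Nat.descFactorial_mul_descFactorial (n := 2*n+ν) (k := m) (m := 2*m) (by omega)]
  have h1 : n.descFactorial m ≤ (2*n+ν).descFactorial m := by
    rw [Nat.descFactorial_eq_factorial_mul_choose, Nat.descFactorial_eq_factorial_mul_choose]
    exact Nat.mul_le_mul_left _ (Nat.choose_le_choose m (by omega))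
  have h2 : 1 ≤ (2*n+ν-m).descFactorial (2*m-m) := by
    rw [Nat.one_le_iff_ne_zero, Ne, Nat.descFactorial_eq_zero_iff_lt]; omega
  nlinarith

lemma w2_tendsto (ν m : ℕ) (x : ℝ) : Tendsto (fun n : ℕ => (n.choose m : ℝ) * x^m /
    ((2*n+ν).descFactorial (2*m) : ℝ)) atTop (𝓝 (if m = 0 then 1 else 0)) := by
  by_cases hm : m = 0
  · subst hm; simp
  rw [if_neg hm]
  have h1 := desc_tendsto 2 ν (2*m)
  have h2 : Tendsto (fun n : ℕ => |x|^m * ((n:ℝ)^m)⁻¹ *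
      (((2*n+ν).descFactorial (2*m) : ℝ) / (n:ℝ)^(2*m))⁻¹) atTop (𝓝 (|x|^m * 0 * (((2:ℕ):ℝ)^(2*m))⁻¹)) := by
    refine Tendsto.mul (Tendsto.const_mul _ ?_) (h1.inv₀ (by positivity))
    exact tendsto_inv_atTop_zero.comp
        ((tendsto_pow_atTop hm).comp tendsto_natCast_atTop_atTop)
  rw [mul_zero, zero_mul] at h2
  refine squeeze_zero_norm' ?_ h2
  filter_upwards [eventually_gt_atTop 0] with n hn
  have hn' : (0:ℝ) < n := by exact_mod_cast hn
  rw [Real.norm_eq_abs, abs_div, abs_mul, abs_pow, Nat.abs_cast, Nat.abs_cast]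
  have : (n.choose m : ℝ) ≤ (n:ℝ)^m := by exact_mod_cast Nat.choose_le_pow n m
  calc _ ≤ (n:ℝ)^m * |x|^m / ((2*n+ν).descFactorial (2*m) : ℝ) := by gcongr
    _ = _ := by rw [inv_div, two_mul m, pow_add]; field_simp

lemma w3_tendsto (ν m : ℕ) (x : ℝ) : Tendsto (fun n : ℕ => (elemE n m : ℝ) * x^m /
    ((2*n+ν).descFactorial (2*m) : ℝ)) atTop (𝓝 ((x/8)^m / m.factorial)) := by
  have h1 := desc_tendsto 2 ν (2*m)
  have h := ((elemE_tendsto m).div h1 (by positivity)).mul_const (x^m)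
  have e : 1/(2^m * (m.factorial:ℝ)) / ((2:ℕ):ℝ)^(2*m) * x^m = (x/8)^m / m.factorial := by
    rw [div_pow, pow_mul, show (8:ℝ) = 2*2^2 by norm_num, mul_pow]
    push_cast
    field_simp
  rw [e] at h
  refine h.congr' ?_
  filter_upwards [eventually_gt_atTop 0] with n hn
  have hn' : (0:ℝ) < n := by exact_mod_cast hn
  simp only [Pi.div_apply]
  rw [div_div_div_cancel_right₀ (by positivity)]
  ring

lemma Df_eq (M : ℕ) (f : ℤ → ℝ) (ν a b : ℕ) (A R : ℝ) (hR : 0 < R) (u : ℕ → ℝ)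
    (hC : ∀ n, Cf M f ν n = A * cgr R ν n * u n) (n : ℕ) :
    Df M f ν a b n = ((b:ℝ)^n)⁻¹ * (A * cgr R ν n * ∑ m ∈ range (n+1),
      (n.choose m : ℝ) * (a * R⁻¹)^m / ((2*n+ν).descFactorial (2*m) : ℝ) * u (n-m)) := by
  unfold Df
  congr 1
  rw [← Finset.sum_flip, Finset.mul_sum]
  refine Finset.sum_congr rfl fun m hm => ?_
  have hm' : m ≤ n := by simp at hm; omega
  rw [Nat.choose_symm hm', hC, cgr_sub R hR ν n m hm', Nat.sub_sub_self hm', mul_pow]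
  ring

lemma xif_eq (M : ℕ) (f : ℤ → ℝ) (ν a b : ℕ) (hb : 1 ≤ b) (A R : ℝ) (hR : 0 < R) (v : ℕ → ℝ)
    (hD : ∀ n, Df M f ν a b n = ((b:ℝ)^n)⁻¹ * (A * cgr R ν n * v n)) (n : ℕ) (hn : 1 ≤ n) :
    xif M f ν a b n = 1 / (n.factorial : ℝ) * (((b:ℝ)^n)⁻¹ * (A * cgr R ν n) * ∑ m ∈ range (n+1),
      (elemE n m : ℝ) * (b * R⁻¹)^m / ((2*n+ν).descFactorial (2*m) : ℝ) * v (n-m)) := by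
  obtain ⟨n, rfl⟩ : ∃ k, n = k+1 := ⟨n-1, by omega⟩
  have hb' : (b:ℝ) ≠ 0 := by positivity
  rw [xif]
  congr 1
  rw [Finset.sum_range_succ _ (n+1), elemE_self]
  simp only [Nat.cast_zero, zero_mul, zero_div, add_zero]
  rw [Finset.mul_sum]
  refine Finset.sum_congr rfl fun m hm => ?_
  have hm' : m ≤ n+1 := by simp at hm; omega
  rw [stirling1_eq (n+1) (n+1-m) m (by omega), hD, cgr_sub R hR ν (n+1) m hm', mul_pow]
  have h3 : (b:ℝ)^(n+1) = (b:ℝ)^(n+1-m) * (b:ℝ)^m := by rw [← pow_add]; congr 1; omega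
  rw [h3]
  field_simp

lemma P_tendsto (ν : ℕ) (hν : ν = 0 ∨ ν = 1) : Tendsto (fun n : ℕ => ((2*n+ν).factorial : ℝ) *
    Real.sqrt Real.pi / ((n.factorial : ℝ)^2 * 2^(2*n+ν) * (n:ℝ)^((ν:ℝ) - 1/2))) atTop (𝓝 1) := by
  rcases hν with rfl | rfl
  · refine central_tendsto.congr' ?_
    filter_upwards [eventually_gt_atTop 0] with n hn
    have hn' : (0:ℝ) < n := by exact_mod_cast hn
    have hsn : 0 < Real.sqrt n := Real.sqrt_pos.2 hn'
    have : (n:ℝ)^(((0:ℕ):ℝ) - 1/2) = (Real.sqrt n)⁻¹ := by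
      rw [Nat.cast_zero, zero_sub, Real.rpow_neg hn'.le, Real.sqrt_eq_rpow]
    rw [this, add_zero, pow_mul]
    norm_num
    field_simp
  · have h1 : Tendsto (fun n : ℕ => (1:ℝ) + (1/2) / (n:ℝ)) atTop (𝓝 (1 + 0)) :=
      tendsto_const_nhds.add (tendsto_const_nhds.div_atTop tendsto_natCast_atTop_atTop)
    have h2 := central_tendsto.mul h1
    rw [add_zero, mul_one] at h2
    refine h2.congr' ?_
    filter_upwards [eventually_gt_atTop 0] with n hn
    have hn' : (0:ℝ) < n := by exact_mod_cast hn
    have hsn : 0 < Real.sqrt n := Real.sqrt_pos.2 hn'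
    have : (n:ℝ)^(((1:ℕ):ℝ) - 1/2) = Real.sqrt n := by
      rw [Real.sqrt_eq_rpow]; norm_num
    have e3 : Real.sqrt n ^ 2 = n := Real.sq_sqrt (by positivity)
    rw [this, Nat.factorial_succ, pow_succ (2:ℝ) (2*n), pow_mul]
    push_cast
    norm_num
    field_simp
    rw [e3]

end helpers

/-- main theorem, asymptotic part.
`ξ_f(n) ~ (−1)^ν (M/(2πk_ν))^(2n+ν+1) G_f^{(ν)}(k_ν) 2^(2n+ν) n! n^(ν−1/2)
          e^(b k_ν² π²/(2M²)) / (b^n √(πM))` as `n → ∞`. -/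
theorem xif_asymptotic (M : ℕ) (hM : 2 ≤ M) (f : ℤ → ℝ)
    (hf : ∀ n : ℤ, f (n + M) = f n) (ν : ℕ) (hν : ν = 0 ∨ ν = 1)
    (a b : ℕ) (hb : 1 ≤ b)
    (kν : ℕ) (hkν : 1 ≤ kν) (hG : Gf M f ν kν ≠ 0)
    (hmin : ∀ j : ℕ, 1 ≤ j → j < kν → Gf M f ν j = 0) :
    Filter.Tendsto
      (fun n : ℕ => xif M f ν a b n /
        ((-1) ^ ν * ((M : ℝ) / (2 * Real.pi * kν)) ^ (2 * n + ν + 1) * Gf M f ν kν *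
          2 ^ (2 * n + ν) * (n.factorial : ℝ) * (n : ℝ) ^ ((ν : ℝ) - 1 / 2) *
          Real.exp ((b : ℝ) * (kν : ℝ) ^ 2 * Real.pi ^ 2 / (2 * (M : ℝ) ^ 2)) /
          ((b : ℝ) ^ n * Real.sqrt (Real.pi * M))))
      Filter.atTop (nhds 1) := by
  have hM0 : (0:ℝ) < M := by positivity
  have hk0 : (0:ℝ) < kν := by positivity
  have hb0 : (0:ℝ) < b := by positivity
  have hs0 : (0:ℝ) < Real.sqrt M := Real.sqrt_pos.2 hM0
  have hpi := Real.pi_pos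
  have hsp : (0:ℝ) < Real.sqrt Real.pi := Real.sqrt_pos.2 hpi
  obtain ⟨x, hx⟩ : ∃ x : ℝ, x = (M:ℝ)/(2*Real.pi*kν) := ⟨_, rfl⟩
  have hx0 : 0 < x := by rw [hx]; positivity
  have hR : 0 < x^2 := by positivity
  have hA : Acst M f ν kν ≠ 0 := by
    unfold Acst
    rw [← hx]
    have : (-1:ℝ)^ν ≠ 0 := by positivity
    positivity
  have hu := Cf_tendsto M hM f hf ν hν kν hkν hG hmin
  rw [← hx] at hu
  set u : ℕ → ℝ := fun n => Cf M f ν n / (Acst M f ν kν * cgr (x^2) ν n) with hu_def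
  have hC : ∀ n, Cf M f ν n = Acst M f ν kν * cgr (x^2) ν n * u n := by
    intro n
    have : cgr (x^2) ν n ≠ 0 := by unfold cgr; positivity
    rw [hu_def]; field_simp
  have hDpos : ∀ n m : ℕ, m ≤ n → (0:ℝ) < ((2*n+ν).descFactorial (2*m) : ℝ) := by
    intro n m h
    rw [Nat.cast_pos, Nat.pos_iff_ne_zero, Ne, Nat.descFactorial_eq_zero_iff_lt]; omega
  have hv := tannery_aux (fun n m => (n.choose m : ℝ) * (a * (x^2)⁻¹)^m /
      ((2*n+ν).descFactorial (2*m) : ℝ)) (fun m => if m = 0 then 1 else 0)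
      (fun m => (a * (x^2)⁻¹)^m / m.factorial) u hu (Real.summable_pow_div_factorial _)
      (by
        intro n m h
        have h1 := hDpos n m h
        rw [abs_of_nonneg (by positivity), div_le_div_iff₀ h1 (by positivity)]
        have h2 : (n.choose m : ℝ) * m.factorial ≤ ((2*n+ν).descFactorial (2*m) : ℝ) := by
          exact_mod_cast desc_cmp ν n m h
        have h3 : 0 ≤ ((a:ℝ) * (x^2)⁻¹)^m := by positivity
        nlinarith)
      (fun m => w2_tendsto ν m _)
  rw [tsum_ite_eq] at hv
  have hD := Df_eq M f ν a b _ _ hR u hC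
  have hxi := xif_eq M f ν a b hb _ _ hR _ hD
  have hS := tannery_aux (fun n m => (elemE n m : ℝ) * (b * (x^2)⁻¹)^m /
      ((2*n+ν).descFactorial (2*m) : ℝ)) (fun m => (b * (x^2)⁻¹/8)^m / m.factorial)
      (fun m => (b * (x^2)⁻¹)^m / m.factorial) _ hv (Real.summable_pow_div_factorial _)
      (by
        intro n m h
        have h1 := hDpos n m h
        rw [abs_of_nonneg (by positivity), div_le_div_iff₀ h1 (by positivity)]
        have h2 : (m.factorial : ℝ) * (elemE n m : ℝ) ≤ ((2*n+ν).descFactorial (2*m) : ℝ) := by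
          exact_mod_cast elemE_bound ν n m
        have h3 : 0 ≤ ((b:ℝ) * (x^2)⁻¹)^m := by positivity
        nlinarith)
      (fun m => w3_tendsto ν m _)
  have hexp : ∑' m : ℕ, ((b:ℝ) * (x^2)⁻¹/8)^m / m.factorial =
      Real.exp ((b : ℝ) * (kν : ℝ) ^ 2 * Real.pi ^ 2 / (2 * (M : ℝ) ^ 2)) := by
    rw [Real.exp_eq_exp_ℝ, NormedSpace.exp_eq_tsum_div]
    have : (b:ℝ) * (x^2)⁻¹/8 = (b : ℝ) * (kν : ℝ) ^ 2 * Real.pi ^ 2 / (2 * (M : ℝ) ^ 2) := by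
      rw [hx]; field_simp; norm_num
    rw [this]
  rw [hexp] at hS
  have hfin := (hS.div_const (Real.exp
    ((b : ℝ) * (kν : ℝ) ^ 2 * Real.pi ^ 2 / (2 * (M : ℝ) ^ 2)))).mul (P_tendsto ν hν)
  rw [div_self (Real.exp_ne_zero _), mul_one] at hfin
  refine hfin.congr' ?_
  filter_upwards [Filter.eventually_ge_atTop 1] with n hn
  rw [hxi n hn, ← hx, Real.sqrt_mul hpi.le]
  have hn' : (0:ℝ) < n := by exact_mod_cast hn
  have hrp : 0 < (n:ℝ)^((ν:ℝ) - 1/2) := Real.rpow_pos_of_pos hn' _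
  generalize ∑ m ∈ Finset.range (n+1), (_ : ℝ) = S
  generalize (n:ℝ)^((ν:ℝ) - 1/2) = y at *
  have hex := Real.exp_pos ((b : ℝ) * (kν : ℝ) ^ 2 * Real.pi ^ 2 / (2 * (M : ℝ) ^ 2))
  generalize Real.exp ((b : ℝ) * (kν : ℝ) ^ 2 * Real.pi ^ 2 / (2 * (M : ℝ) ^ 2)) = E at *
  unfold Acst cgr
  rw [← hx]
  generalize Gf M f ν kν = G at *
  have e3 : (-1:ℝ)^ν ≠ 0 := by positivity
  have hfa : (0:ℝ) < n.factorial := by positivity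
  rw [show x^(2*n+ν+1) = (x^2)^n * x^(ν+1) by rw [← pow_mul, ← pow_add]; ring_nf]
  field_simp
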